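/- Let ξ ≥ 1, let 0 ≤ x < 2 and 0 ≤ y < 2 with ξ·x·y < 4, and let K_η, K_ζ be real numbers satisfying K_η ≥ 1 + K_ζ·y/2 and K_ζ ≥ (ξ − 1)/2 + ξ·K_η·x/2. Then K_η ≥ (1 + (ξ − 1)y/4)/(1 − ξxy/4) and K_ζ ≥ ((ξ − 1) + ξx)/(2(1 − ξxy/4)). -/

import Mathlib

section CoupledBounds

variable {𝕜 : Type*} [Field 𝕜] [LinearOrder 𝕜] [IsStrictOrderedRing 𝕜]

-- The bound is the `u`-coordinate of the vertex where both `hu` and `hv` are equalities.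
lemma div_one_sub_mul_le_of_add_mul_le {a b c d u v : 𝕜} (hb : 0 ≤ b) (hbd : b * d < 1)
    (hu : a + b * v ≤ u) (hv : c + d * u ≤ v) : (a + b * c) / (1 - b * d) ≤ u := by
  have v_eliminated : a + b * (c + d * u) ≤ u :=
    calc a + b * (c + d * u) ≤ a + b * v := by gcongr
      _ ≤ u := hu
  rw [div_le_iff₀ (sub_pos.2 hbd)]
  linarith

theorem stmt18_general {ξ x y Kη Kζ : 𝕜} (hξ : 0 ≤ ξ) (hx : 0 ≤ x) (hy : 0 ≤ y)
    (hξxy : ξ * x * y < 4)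
    (hη : 1 + Kζ * y / 2 ≤ Kη) (hζ : (ξ - 1) / 2 + ξ * Kη * x / 2 ≤ Kζ) :
    (1 + (ξ - 1) * y / 4) / (1 - ξ * x * y / 4) ≤ Kη ∧
    ((ξ - 1) + ξ * x) / (2 * (1 - ξ * x * y / 4)) ≤ Kζ := by
  have hη' : 1 + y / 2 * Kζ ≤ Kη := by linarith
  have hζ' : (ξ - 1) / 2 + ξ * x / 2 * Kη ≤ Kζ := by linarith
  constructor
  · calc (1 + (ξ - 1) * y / 4) / (1 - ξ * x * y / 4)
        = (1 + y / 2 * ((ξ - 1) / 2)) / (1 - y / 2 * (ξ * x / 2)) := by ring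
      _ ≤ Kη := div_one_sub_mul_le_of_add_mul_le (by positivity) (by linarith) hη' hζ'
  · calc ((ξ - 1) + ξ * x) / (2 * (1 - ξ * x * y / 4))
        = ((ξ - 1) / 2 + ξ * x / 2 * 1) / (1 - ξ * x / 2 * (y / 2)) := by rw [← div_div]; ring
      _ ≤ Kζ := div_one_sub_mul_le_of_add_mul_le (by positivity) (by linarith) hζ' hη'

end CoupledBounds

/-- Lower bounds on the interaction-potential weights in the increasing-pressure case. -/
theorem stmt18 (ξ x y Kη Kζ : ℝ) (hξ : 1 ≤ ξ)
    (hx : 0 ≤ x) (hx2 : x < 2) (hy : 0 ≤ y) (hy2 : y < 2)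
    (hξxy : ξ * x * y < 4)
    (h1 : Kη ≥ 1 + Kζ * y / 2) (h2 : Kζ ≥ (ξ - 1) / 2 + ξ * Kη * x / 2) :
    Kη ≥ (1 + (ξ - 1) * y / 4) / (1 - ξ * x * y / 4) ∧
    Kζ ≥ ((ξ - 1) + ξ * x) / (2 * (1 - ξ * x * y / 4)) :=
  stmt18_general (zero_le_one.trans hξ) hx hy hξxy h1 h2
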